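/- Let s ∈ (0,1), let N ≥ 2 be an integer, and let Ω ⊂ ℝ^N be a bounded open set of class C^{1,1} with 0 ∈ Ω, symmetric with respect to two distinct coordinate hyperplanes H_j = {x_j = 0} and H_i = {x_i = 0} (i ≠ j), i.e. T_j(Ω) = Ω and T_i(Ω) = Ω where T_k(x) = x − 2 x_k e_k. Suppose H : Ω × ℝ^N → ℝ is such that for every x ∈ Ω the function z ↦ H(x,z) is continuous and bounded on ℝ^N, equals b_{N,s}|x−z|^{2s−N} for all z ∈ ℝ^N∖Ω, and is pointwise s-harmonic in Ω: for every z ∈ Ω the integral (c_{N,s}/2) ∫_{ℝ^N} (2H(x,z) − H(x,z+h) − H(x,z−h))/|h|^{N+2s} dh converges absolutely and equals 0. Define R_s(x) := H(x,x) and assume R_s is twice continuously differentiable in a neighborhood of 0. Then the mixed second partial derivative satisfies ∂_i ∂_j R_s(0) = 0. -/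

import Mathlib

open MeasureTheory Real Filter Metric

noncomputable section

/-- Euclidean space `ℝ^N`. -/
abbrev Euc (N : ℕ) := EuclideanSpace ℝ (Fin N)

/-- The normalizing constant `c_{N,s}` of the fractional Laplacian. -/
def cNs (N : ℕ) (s : ℝ) : ℝ :=
  Real.pi ^ ((N : ℝ) / 2) * s * (4 : ℝ) ^ s * Real.Gamma (((N : ℝ) + 2 * s) / 2) /
    Real.Gamma (1 - s)

/-- The constant `b_{N,s}` of the fundamental solution. -/
def bNs (N : ℕ) (s : ℝ) : ℝ :=
  Real.pi ^ (-(N : ℝ) / 2) * (4 : ℝ) ^ (-s) * Real.Gamma (((N : ℝ) - 2 * s) / 2) /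
    Real.Gamma s

/-- The fractional Laplacian `(-Δ)^s u (x)`, via the absolutely convergent
symmetrized integral `-(c_{N,s}/2) ∫ (u(x+h)+u(x-h)-2u(x))/|h|^{N+2s} dh`. -/
def fracLap (N : ℕ) (s : ℝ) (u : Euc N → ℝ) (x : Euc N) : ℝ :=
  -(cNs N s / 2) * ∫ h : Euc N, (u (x + h) + u (x - h) - 2 * u x) / ‖h‖ ^ ((N : ℝ) + 2 * s)

/-- `φ ∈ C_c^∞(Ω)`. -/
def IsTestFn (N : ℕ) (Ω : Set (Euc N)) (φ : Euc N → ℝ) : Prop :=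
  ContDiff ℝ (⊤ : ℕ∞) φ ∧ HasCompactSupport φ ∧ tsupport φ ⊆ Ω

/-- The signed distance `δ̄(z) = dist(z, Ωᶜ) - dist(z, Ω)`. -/
def signedDistEuc (N : ℕ) (Ω : Set (Euc N)) (z : Euc N) : ℝ :=
  Metric.infDist z Ωᶜ - Metric.infDist z Ω

/-- A bounded open set of class `C^{1,1}`: the signed distance is differentiable with
Lipschitz gradient on a neighborhood of `∂Ω`. -/
def IsC11 (N : ℕ) (Ω : Set (Euc N)) : Prop :=
  IsOpen Ω ∧ Bornology.IsBounded Ω ∧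
    ∃ U : Set (Euc N), IsOpen U ∧ frontier Ω ⊆ U ∧
      (∀ z ∈ U, DifferentiableAt ℝ (signedDistEuc N Ω) z) ∧
      ∃ K : NNReal, LipschitzOnWith K (fun z => gradient (signedDistEuc N Ω) z) U

/-- `δ(z) = dist(z, ∂Ω)`. -/
def bdist (N : ℕ) (Ω : Set (Euc N)) (z : Euc N) : ℝ := Metric.infDist z (frontier Ω)

/-- The outward unit normal `ν = -∇δ̄` (meaningful on `∂Ω`). -/
def outNormal (N : ℕ) (Ω : Set (Euc N)) (θ : Euc N) : Euc N :=
  -gradient (signedDistEuc N Ω) θ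

/-- The surface measure on `∂Ω`: the `(N-1)`-dimensional Hausdorff measure
restricted to `∂Ω`. -/
def surf (N : ℕ) (Ω : Set (Euc N)) : Measure (Euc N) :=
  (μH[(N : ℝ) - 1]).restrict (frontier Ω)

/-- `g` is the fractional normal trace `γ_0^s(w)` on `∂Ω`. -/
def HasFracTrace (N : ℕ) (s : ℝ) (Ω : Set (Euc N)) (w g : Euc N → ℝ) : Prop :=
  ContinuousOn g (frontier Ω) ∧
    ∀ θ ∈ frontier Ω,
      Filter.Tendsto (fun z => w z / bdist N Ω z ^ s) (nhdsWithin θ Ω) (nhds (g θ))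

/-- `G` is a Green function of `(-Δ)^s` in `Ω` with pole at `x`, with constant `C`
in the Green function estimate. -/
def IsGreenFn (N : ℕ) (s : ℝ) (Ω : Set (Euc N)) (C : ℝ) (x : Euc N) (G : Euc N → ℝ) : Prop :=
  Integrable G ∧ (∀ z, z ∉ Ω → G z = 0) ∧
    (∀ φ, IsTestFn N Ω φ → ∫ z in Ω, G z * fracLap N s φ z = φ x) ∧
    ∀ z, z ≠ x → 0 ≤ G z ∧
      G z ≤ C * min (‖x - z‖ ^ (2 * s - (N : ℝ)))
        (bdist N Ω x ^ s * bdist N Ω z ^ s * ‖x - z‖ ^ (-(N : ℝ)))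

/-- The quadratic form `E_s(u,v)` associated with `(-Δ)^s`. -/
def Es (N : ℕ) (s : ℝ) (u v : Euc N → ℝ) : ℝ :=
  (cNs N s / 2) *
    ∫ p : Euc N × Euc N, (u p.1 - u p.2) * (v p.1 - v p.2) / ‖p.1 - p.2‖ ^ ((N : ℝ) + 2 * s)

/-- `u` is a weak solution of `(-Δ)^s u = f(·,u)` in `Ω`, `u = 0` outside `Ω`. -/
def IsWeakSolution (N : ℕ) (s : ℝ) (Ω : Set (Euc N)) (f : Euc N → ℝ → ℝ) (u : Euc N → ℝ) :
    Prop :=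
  (∃ C : NNReal, HolderWith C s.toNNReal u) ∧ (∀ z, z ∉ Ω → u z = 0) ∧
    ∀ φ, IsTestFn N Ω φ → Es N s u φ = ∫ z in Ω, f z (u z) * φ z

/-- Locally `β`-Hölder continuous function. -/
def LocHolder {X : Type*} [PseudoEMetricSpace X] (β : ℝ) (f : X → ℝ) : Prop :=
  ∀ p : X, ∃ t ∈ nhds p, ∃ C : NNReal, HolderOnWith C β.toNNReal f t

/-- The reflection `T_k(x) = x - 2 x_k e_k` across the hyperplane `{x_k = 0}`. -/
def reflectHyp (N : ℕ) (k : Fin N) (x : Euc N) : Euc N :=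
  x - (2 * x k) • EuclideanSpace.single k 1

/-!
Applying the reflection `T` in `{x_j = 0}` to both arguments of `H` produces another solution of
the same exterior value problem, and the maximum principle makes solutions unique, so
`H (T x) (T z) = H x z`. On the diagonal, the Robin function is even in `x_j`; its second
derivative at a point of the mirror is therefore a `T`-invariant bilinear form, for which the
`-1`-eigenvector `e_j` and the fixed vector `e_i` are orthogonal.
-/

open scoped Topology

section Harmonic

variable {E : Type*} [NormedAddCommGroup E] {p : ℝ} {u v : E → ℝ} {Ω : Set E}

/-- The integrand, as a function of the increment `h`, of the symmetrized fractional Laplacian of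
`u` at `z`. The order enters only through `p`, which is `N + 2s` for `(-Δ)^s` on `ℝ^N`. -/
def symmDiffQuotient (p : ℝ) (u : E → ℝ) (z h : E) : ℝ :=
  (2 * u z - u (z + h) - u (z - h)) / ‖h‖ ^ p

theorem symmDiffQuotient_sub (p : ℝ) (u v : E → ℝ) (z : E) :
    symmDiffQuotient p (u - v) z = symmDiffQuotient p u z - symmDiffQuotient p v z := by
  funext h
  simp only [symmDiffQuotient, Pi.sub_apply]
  ring

theorem symmDiffQuotient_nonneg {z : E} (hz : ∀ y, u y ≤ u z) : 0 ≤ symmDiffQuotient p u z :=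
  fun h => div_nonneg (by linarith [hz (z + h), hz (z - h)]) (by positivity)

theorem eq_of_symmDiffQuotient_eq_zero {z h : E} (hz : ∀ y, u y ≤ u z)
    (hh : symmDiffQuotient p u z h = 0) : u (z + h) = u z := by
  rcases eq_or_ne h 0 with rfl | hne
  · rw [add_zero]
  · have hpow : ‖h‖ ^ p ≠ 0 := (rpow_pos_of_pos (norm_pos_iff.mpr hne) p).ne'
    have hnum := (div_eq_zero_iff.mp hh).resolve_right hpow
    linarith [hz (z + h), hz (z - h)]

theorem not_dense_of_isBounded [NormedSpace ℝ E] [Nontrivial E] (hΩ : Bornology.IsBounded Ω) :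
    ¬ Dense Ω := fun hd =>
  NormedSpace.unbounded_univ ℝ E (hd.closure_eq ▸ hΩ.closure)

variable [MeasurableSpace E] {μ : Measure E}

/-- Pointwise harmonicity in `Ω` for the fractional Laplacian with kernel `‖h‖ ^ (-p) ∂μ`: the
symmetrized integral converges absolutely and vanishes. Integrability is part of the notion since
the integral of a non-integrable function is `0` in Lean. -/
structure IsFracHarmonicOn (μ : Measure E) (p : ℝ) (u : E → ℝ) (Ω : Set E) : Prop where
  integrable : ∀ z ∈ Ω, Integrable (symmDiffQuotient p u z) μ
  integral_eq_zero : ∀ z ∈ Ω, ∫ h, symmDiffQuotient p u z h ∂μ = 0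

theorem IsFracHarmonicOn.sub (hu : IsFracHarmonicOn μ p u Ω) (hv : IsFracHarmonicOn μ p v Ω) :
    IsFracHarmonicOn μ p (u - v) Ω where
  integrable z hz := by
    rw [symmDiffQuotient_sub]
    exact (hu.integrable z hz).sub (hv.integrable z hz)
  integral_eq_zero z hz := by
    rw [symmDiffQuotient_sub, integral_sub' (hu.integrable z hz) (hv.integrable z hz),
      hu.integral_eq_zero z hz, hv.integral_eq_zero z hz, sub_zero]

variable [NormedSpace ℝ E]

theorem IsFracHarmonicOn.comp_linearIsometryEquiv [BorelSpace E] {T : E ≃ₗᵢ[ℝ] E}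
    (hT : MeasurePreserving T μ μ) (hu : IsFracHarmonicOn μ p u Ω) :
    IsFracHarmonicOn μ p (u ∘ T) (T ⁻¹' Ω) := by
  have hcomp (z : E) : symmDiffQuotient p (u ∘ T) z = symmDiffQuotient p u (T z) ∘ T := by
    funext h
    simp only [symmDiffQuotient, Function.comp_apply, map_add, map_sub, T.norm_map]
  refine ⟨fun z hz => ?_, fun z hz => ?_⟩
  · rw [hcomp]
    exact hT.integrable_comp_of_integrable (hu.integrable (T z) hz)
  · rw [hcomp]
    exact (hT.integral_comp T.toHomeomorph.measurableEmbedding _).trans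
      (hu.integral_eq_zero (T z) hz)

section MaximumPrinciple

variable [Nontrivial E] [ProperSpace E] [μ.IsOpenPosMeasure]

theorem le_zero_of_integral_symmDiffQuotient_le_zero (hΩ : Bornology.IsBounded Ω)
    (husc : UpperSemicontinuousOn u (closure Ω)) (hout : ∀ z ∉ Ω, u z ≤ 0)
    (hint : ∀ z ∈ Ω, Integrable (symmDiffQuotient p u z) μ)
    (hsub : ∀ z ∈ Ω, ∫ h, symmDiffQuotient p u z h ∂μ ≤ 0) (y : E) : u y ≤ 0 := by
  by_contra! hy
  have mem_of_pos {z : E} (hz : 0 < u z) : z ∈ Ω := by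
    contrapose! hz
    exact hout z hz
  obtain ⟨z, -, hmax⟩ := husc.exists_isMaxOn ⟨y, subset_closure (mem_of_pos hy)⟩
    hΩ.isCompact_closure
  have hzpos : 0 < u z := hy.trans_le (hmax (subset_closure (mem_of_pos hy)))
  have hle (x : E) : u x ≤ u z := by
    by_cases hx : x ∈ Ω
    · exact hmax (subset_closure hx)
    · exact (hout x hx).trans hzpos.le
  have hzero : ∫ h, symmDiffQuotient p u z h ∂μ = 0 :=
    (hsub z (mem_of_pos hzpos)).antisymm (integral_nonneg (symmDiffQuotient_nonneg hle))
  have hae : ∀ᵐ h ∂μ, z + h ∈ Ω := by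
    filter_upwards [(integral_eq_zero_iff_of_nonneg (symmDiffQuotient_nonneg hle)
      (hint z (mem_of_pos hzpos))).mp hzero] with h hh
    exact mem_of_pos (hzpos.trans_eq (eq_of_symmDiffQuotient_eq_zero hle hh).symm)
  have hdense : Dense ((z + ·) ⁻¹' Ω) := Measure.dense_of_ae hae
  exact not_dense_of_isBounded hΩ <| ((Homeomorph.addLeft z).surjective.denseRange.dense_image
    (Homeomorph.addLeft z).continuous hdense).mono (Set.image_preimage_subset _ _)

theorem IsFracHarmonicOn.eq_of_eq_outside (hΩ : Bornology.IsBounded Ω)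
    (hu : IsFracHarmonicOn μ p u Ω) (hv : IsFracHarmonicOn μ p v Ω)
    (hucont : ContinuousOn u (closure Ω)) (hvcont : ContinuousOn v (closure Ω))
    (hout : ∀ z ∉ Ω, u z = v z) : u = v := by
  have le_of_data {u v : E → ℝ} (hu : IsFracHarmonicOn μ p u Ω) (hv : IsFracHarmonicOn μ p v Ω)
      (hucont : ContinuousOn u (closure Ω)) (hvcont : ContinuousOn v (closure Ω))
      (hout : ∀ z ∉ Ω, u z = v z) : u ≤ v := fun z =>
    sub_nonpos.mp <| le_zero_of_integral_symmDiffQuotient_le_zero hΩ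
      (hucont.sub hvcont).upperSemicontinuousOn (fun z hz => (sub_eq_zero.mpr (hout z hz)).le)
      (hu.sub hv).integrable (fun z hz => ((hu.sub hv).integral_eq_zero z hz).le) z
  exact (le_of_data hu hv hucont hvcont hout).antisymm
    (le_of_data hv hu hvcont hucont fun z hz => (hout z hz).symm)

theorem apply_map_map_eq_of_isFracHarmonicOn [BorelSpace E] {T : E ≃ₗᵢ[ℝ] E}
    (hT : MeasurePreserving T μ μ) (hΩ : Bornology.IsBounded Ω) (hTΩ : T '' Ω = Ω)
    {H : E → E → ℝ} (hharm : ∀ x ∈ Ω, IsFracHarmonicOn μ p (H x) Ω)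
    (hcont : ∀ x ∈ Ω, ContinuousOn (H x) (closure Ω))
    (hout : ∀ x ∈ Ω, ∀ z ∉ Ω, H (T x) (T z) = H x z) {x : E} (hx : x ∈ Ω) (z : E) :
    H (T x) (T z) = H x z := by
  have hmaps : Set.MapsTo T Ω Ω := Set.mapsTo_iff_image_subset.mpr hTΩ.subset
  have hpre : T ⁻¹' Ω = Ω := by
    nth_rw 1 [← hTΩ]
    exact Set.preimage_image_eq Ω T.injective
  have hharmT : IsFracHarmonicOn μ p (H (T x) ∘ T) Ω := by
    simpa only [hpre] using (hharm (T x) (hmaps hx)).comp_linearIsometryEquiv hT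
  have hcontT : ContinuousOn (H (T x) ∘ T) (closure Ω) :=
    (hcont (T x) (hmaps hx)).comp T.continuous.continuousOn (hmaps.closure T.continuous)
  exact congrFun
    (hharmT.eq_of_eq_outside hΩ (hharm x hx) hcontT (hcont x hx) (hout x hx)) z

end MaximumPrinciple

end Harmonic

section SecondDerivative

variable {𝕜 E F : Type*} [NontriviallyNormedField 𝕜] [NormedAddCommGroup E] [NormedSpace 𝕜 E]
  [NormedAddCommGroup F] [NormedSpace 𝕜 F] {f : E → F} {x : E}

theorem iteratedFDeriv_apply_map_of_comp_eventuallyEq {T : E ≃L[𝕜] E}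
    (hf : f ∘ T =ᶠ[𝓝 x] f) (hx : T x = x) (n : ℕ) (m : Fin n → E) :
    iteratedFDeriv 𝕜 n f x (T ∘ m) = iteratedFDeriv 𝕜 n f x m := by
  have hcomp : iteratedFDeriv 𝕜 n (f ∘ T) x =
      (iteratedFDeriv 𝕜 n f x).compContinuousLinearMap fun _ => (T : E →L[𝕜] E) := by
    simpa only [Set.preimage_univ, iteratedFDerivWithin_univ, hx] using
      T.iteratedFDerivWithin_comp_right f uniqueDiffOn_univ (Set.mem_univ (T x)) n
  exact congrArg (· m) (hcomp.symm.trans (hf.iteratedFDeriv 𝕜 n).eq_of_nhds)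

theorem fderiv_fderiv_apply_eq_zero_of_comp_eventuallyEq [CharZero 𝕜]
    {T : E ≃L[𝕜] E} {v w : E} (hf : f ∘ T =ᶠ[𝓝 x] f) (hx : T x = x) (hv : T v = -v) (hw : T w = w) :
    fderiv 𝕜 (fderiv 𝕜 f) x w v = 0 := by
  have hinv := iteratedFDeriv_apply_map_of_comp_eventuallyEq hf hx 2 ![w, v]
  simp only [iteratedFDeriv_two_apply, Function.comp_apply, Matrix.cons_val_zero,
    Matrix.cons_val_one, hv, hw, map_neg] at hinv
  have : IsAddTorsionFree F := .of_isTorsionFree 𝕜 F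
  exact self_eq_neg.mp hinv.symm

theorem fderiv_fderiv_apply_const (hf : ContDiffAt 𝕜 2 f x) (v w : E) :
    fderiv 𝕜 (fun y => fderiv 𝕜 f y v) x w = fderiv 𝕜 (fderiv 𝕜 f) x w v := by
  have hdiff : DifferentiableAt 𝕜 (fderiv 𝕜 f) x :=
    (hf.fderiv_right (m := 1) (by norm_num)).differentiableAt one_ne_zero
  rw [fderiv_clm_apply hdiff (differentiableAt_const v)]
  simp

end SecondDerivative

section CoordinateReflection

variable {N : ℕ}

/-- The coordinate reflection `reflectHyp N k` as a linear isometry. -/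
def reflectHypIsometry (N : ℕ) (k : Fin N) : Euc N ≃ₗᵢ[ℝ] Euc N :=
  (ℝ ∙ (EuclideanSpace.single k 1 : Euc N))ᗮ.reflection

theorem coe_reflectHypIsometry (k : Fin N) : ⇑(reflectHypIsometry N k) = reflectHyp N k := by
  funext x
  rw [reflectHypIsometry, Submodule.reflection_orthogonal_apply,
    Submodule.reflection_singleton_apply]
  simp [reflectHyp, EuclideanSpace.inner_single_left, mul_smul, two_smul]

theorem reflectHypIsometry_single_self (k : Fin N) :
    reflectHypIsometry N k (EuclideanSpace.single k 1) = -EuclideanSpace.single k 1 :=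
  Submodule.reflection_mem_subspace_orthogonalComplement_eq_neg <| by simp

theorem reflectHypIsometry_of_apply_eq_zero {k : Fin N} {x : Euc N} (hx : x k = 0) :
    reflectHypIsometry N k x = x := by
  simp [coe_reflectHypIsometry, reflectHyp, hx]

end CoordinateReflection

theorem cNs_pos (N : ℕ) {s : ℝ} (hs0 : 0 < s) (hs1 : s < 1) : 0 < cNs N s :=
  div_pos (by positivity) (Gamma_pos_of_pos (sub_pos.mpr hs1))

theorem isFracHarmonicOn_of_cNs_mul_integral_eq_zero {N : ℕ} {s : ℝ} (hs0 : 0 < s) (hs1 : s < 1)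
    {u : Euc N → ℝ} {Ω : Set (Euc N)}
    (hu : ∀ z ∈ Ω,
      Integrable (fun h => (2 * u z - u (z + h) - u (z - h)) / ‖h‖ ^ ((N : ℝ) + 2 * s)) ∧
      cNs N s / 2 * ∫ h, (2 * u z - u (z + h) - u (z - h)) / ‖h‖ ^ ((N : ℝ) + 2 * s) = 0) :
    IsFracHarmonicOn volume ((N : ℝ) + 2 * s) u Ω where
  integrable z hz := (hu z hz).1
  integral_eq_zero z hz :=
    (mul_eq_zero.mp (hu z hz).2).resolve_left (half_pos (cNs_pos N hs0 hs1)).ne'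

theorem statement6_general {E : Type*} [NormedAddCommGroup E] [NormedSpace ℝ E] [ProperSpace E]
    [MeasurableSpace E] [BorelSpace E] {μ : Measure E} [μ.IsOpenPosMeasure]
    {T : E ≃ₗᵢ[ℝ] E} (hT : MeasurePreserving T μ μ) {Ω : Set E} (hΩo : IsOpen Ω)
    (hΩb : Bornology.IsBounded Ω) (hTΩ : T '' Ω = Ω) {x₀ v w : E} (hx₀ : x₀ ∈ Ω)
    (hTx₀ : T x₀ = x₀) (hTv : T v = -v) (hTw : T w = w) {p : ℝ} {H : E → E → ℝ}
    (hcont : ∀ x ∈ Ω, ContinuousOn (H x) (closure Ω)) {Φ : ℝ → ℝ}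
    (hout : ∀ x ∈ Ω, ∀ z, z ∉ Ω → H x z = Φ ‖x - z‖)
    (hharm : ∀ x ∈ Ω, IsFracHarmonicOn μ p (H x) Ω)
    (hC2 : ContDiffAt ℝ 2 (fun x => H x x) x₀) :
    fderiv ℝ (fun y => fderiv ℝ (fun x => H x x) y v) x₀ w = 0 := by
  rcases subsingleton_or_nontrivial E with _ | _
  · rw [Subsingleton.elim w 0, map_zero]
  have hTout (x : E) (hx : x ∈ Ω) (z : E) (hz : z ∉ Ω) : H (T x) (T z) = H x z := by
    have hTx : T x ∈ Ω := hTΩ.subset (Set.mem_image_of_mem T hx)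
    have hTz : T z ∉ Ω := by rwa [← hTΩ, T.injective.mem_set_image]
    rw [hout x hx z hz, hout (T x) hTx (T z) hTz, ← map_sub, T.norm_map]
  have heven : (fun x => H x x) ∘ T.toContinuousLinearEquiv =ᶠ[𝓝 x₀] fun x => H x x := by
    filter_upwards [hΩo.mem_nhds hx₀] with x hx
    exact apply_map_map_eq_of_isFracHarmonicOn hT hΩb hTΩ hharm hcont hTout hx x
  rw [fderiv_fderiv_apply_const hC2]
  exact fderiv_fderiv_apply_eq_zero_of_comp_eventuallyEq heven hTx₀ hTv hTw

/-- vanishing of the mixed second derivative of the fractional Robin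
function at the center of a doubly symmetric domain. -/
theorem statement6
    (s : ℝ) (hs0 : 0 < s) (hs1 : s < 1)
    (N : ℕ) (hN : 2 ≤ N)
    (Ω : Set (Euc N)) (hΩ : IsC11 N Ω) (h0 : (0 : Euc N) ∈ Ω)
    (j i : Fin N) (hij : i ≠ j)
    (hsymj : reflectHyp N j '' Ω = Ω) (hsymi : reflectHyp N i '' Ω = Ω)
    (H : Euc N → Euc N → ℝ)
    (hHcont : ∀ x ∈ Ω, Continuous (H x))
    (hHbdd : ∀ x ∈ Ω, ∃ M : ℝ, ∀ z, |H x z| ≤ M)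
    (hHout : ∀ x ∈ Ω, ∀ z, z ∉ Ω → H x z = bNs N s * ‖x - z‖ ^ (2 * s - (N : ℝ)))
    (hHharm : ∀ x ∈ Ω, ∀ z ∈ Ω,
      Integrable (fun h : Euc N =>
        (2 * H x z - H x (z + h) - H x (z - h)) / ‖h‖ ^ ((N : ℝ) + 2 * s)) ∧
      (cNs N s / 2) *
        (∫ h : Euc N,
          (2 * H x z - H x (z + h) - H x (z - h)) / ‖h‖ ^ ((N : ℝ) + 2 * s)) = 0)
    (hRC2 : ∃ V ∈ nhds (0 : Euc N), ContDiffOn ℝ 2 (fun x => H x x) V) :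
    fderiv ℝ (fun y => fderiv ℝ (fun x => H x x) y (EuclideanSpace.single j 1)) 0
      (EuclideanSpace.single i 1) = 0 := by
  obtain ⟨V, hV, hR⟩ := hRC2
  exact statement6_general (reflectHypIsometry N j).measurePreserving hΩ.1 hΩ.2.1
    (by rwa [coe_reflectHypIsometry]) h0 (map_zero _) (reflectHypIsometry_single_self j)
    (reflectHypIsometry_of_apply_eq_zero (by simp [hij.symm]))
    (fun x hx => (hHcont x hx).continuousOn) (Φ := fun r => bNs N s * r ^ (2 * s - (N : ℝ))) hHout
    (fun x hx => isFracHarmonicOn_of_cNs_mul_integral_eq_zero hs0 hs1 (hHharm x hx))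
    (hR.contDiffAt hV)
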